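/- arXiv:2005.10909 — 2 statements merged into one kernel-verified Lean document; each statement's English description precedes it below -/
import Mathlib

section
/- Let 1 ≤ p < +∞ and let f be analytic on the unit disc 𝔻. If lim_{ρ→1⁻} sup_{θ∈[0,2π]} (∫_ρ¹ |f'(re^{iθ})|^p (1-r)^p dr)^{1/p} = 0, then lim_{ρ→1⁻} sup_θ (1-ρ)^{1/p}|f(ρe^{iθ})| = 0 and f ∈ RM(p,0). -/
open MeasureTheory Metric Set Filter
open scoped ENNReal

/-- The point `r e^{iθ}` of the complex plane. -/
noncomputable def circ (r θ : ℝ) : ℂ := r * Complex.exp (θ * Complex.I)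

/-- The tail quantity `sup_θ (∫_ρ¹ |h(re^{iθ})|^p dr)^{1/p}` (with values in `ℝ≥0∞`). -/
noncomputable def tailSup (p : ℝ) (h : ℂ → ℂ) (ρ : ℝ) : ℝ≥0∞ :=
  ⨆ θ : ℝ, (∫⁻ r in Ioc ρ 1, ENNReal.ofReal (‖h (circ r θ)‖ ^ p)) ^ (1/p)

/-- `f` belongs to `RM(p,0)`: `f` is analytic on the unit disc and
`lim_{ρ→1⁻} sup_θ (∫_ρ¹ |f(re^{iθ})|^p dr)^{1/p} = 0`. -/
def memRMp0 (p : ℝ) (f : ℂ → ℂ) : Prop :=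
  DifferentiableOn ℂ f (ball (0:ℂ) 1) ∧
    Tendsto (tailSup p f) (nhdsWithin 1 (Iio (1:ℝ))) (nhds 0)

/-
Along a ray, `γ r = f (r e^{iθ})` satisfies a Hardy inequality that also controls the endpoint,
`∫_a^b ‖γ‖^p + 2 (1 - b) ‖γ b‖^p ≤ 2 (1 - a) ‖γ a‖^p + (2p)^p ∫_a^b ‖γ'‖^p (1 - r)^p`,
with constants independent of `θ`. Applied to `γ - γ a` it gives
`(1 - b) ‖γ b - γ a‖^p ≤ (2p)^p ∫_a^1 ‖γ'‖^p (1 - r)^p`, which is uniformly small once `a` is close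
to `1`; letting `b → 1` with `a` fixed, the term `(1 - b) ‖γ a‖^p` vanishes as `f` is bounded on
compact subsets of the disc, and the growth estimate follows. Letting `b → 1` in the inequality for
`γ` itself bounds `∫_a^1 ‖γ‖^p` by this growth term at `a` and the tail of the hypothesis.
-/

open scoped Topology

lemma mul_rpow_sub_one_le_rpow_add_rpow {p x y : ℝ} (hp : 1 ≤ p) (hx : 0 ≤ x) (hy : 0 ≤ y) :
    x * y ^ (p - 1) ≤ x ^ p + y ^ p := by
  have hmax : 0 ≤ max x y := hx.trans (le_max_left x y)
  calc x * y ^ (p - 1) ≤ max x y * max x y ^ (p - 1) := by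
        have : 0 ≤ p - 1 := sub_nonneg.2 hp
        gcongr
        exacts [le_max_left x y, le_max_right x y]
    _ = max x y ^ p := by
        rw [← Real.rpow_one_add' hmax (by linarith), add_sub_cancel]
    _ ≤ x ^ p + y ^ p := by
        rcases max_choice x y with h | h <;> rw [h]
        · exact le_add_of_nonneg_right (by positivity)
        · exact le_add_of_nonneg_left (by positivity)

lemma norm_add_rpow_le {E : Type*} [SeminormedAddCommGroup E] {p : ℝ} (hp : 1 ≤ p) (x y : E) :
    ‖x + y‖ ^ p ≤ 2 ^ (p - 1) * (‖x‖ ^ p + ‖y‖ ^ p) := by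
  calc ‖x + y‖ ^ p ≤ (‖x‖ + ‖y‖) ^ p := by gcongr; exact norm_add_le x y
    _ ≤ 2 ^ (p - 1) * (‖x‖ ^ p + ‖y‖ ^ p) :=
        mod_cast NNReal.rpow_add_le_mul_rpow_add_rpow ‖x‖₊ ‖y‖₊ hp

lemma ofReal_mul_rpow_rpow_one_div {x y p : ℝ} (hx : 0 ≤ x) (hy : 0 ≤ y) (hp : 0 < p) :
    ENNReal.ofReal (x * y ^ p) ^ (1 / p) = ENNReal.ofReal (x ^ (1 / p) * y) := by
  rw [ENNReal.ofReal_rpow_of_nonneg (by positivity) (by positivity),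
    Real.mul_rpow hx (by positivity), ← Real.rpow_mul hy, mul_one_div_cancel hp.ne',
    Real.rpow_one]

lemma tendsto_iSup_rpow_zero_iff {α ι : Type*} {l : Filter α} {g : α → ι → ℝ≥0∞} {q : ℝ}
    (hq : 0 < q) :
    Tendsto (fun a ↦ ⨆ i, g a i ^ q) l (𝓝 0) ↔ Tendsto (fun a ↦ ⨆ i, g a i) l (𝓝 0) := by
  have hmap : (fun a ↦ ⨆ i, g a i ^ q) = ENNReal.orderIsoRpow q hq ∘ fun a ↦ ⨆ i, g a i :=
    funext fun a ↦ ((ENNReal.orderIsoRpow q hq).map_iSup (g a)).symm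
  have hzero : ENNReal.orderIsoRpow q hq 0 = 0 := ENNReal.zero_rpow_of_pos hq
  have hinducing := (ENNReal.orderIsoRpow q hq).toHomeomorph.isInducing
  rw [hmap]
  nth_rw 1 [← hzero]
  exact hinducing.tendsto_nhds_iff.symm

lemma continuousOn_norm_rpow_mul_sub_rpow {E : Type*} [SeminormedAddCommGroup E] {p T : ℝ}
    {γ : ℝ → E} {s : Set ℝ} (hp : 0 ≤ p) (hγ : ContinuousOn γ s) :
    ContinuousOn (fun r ↦ ‖γ r‖ ^ p * (T - r) ^ p) s :=
  (hγ.norm.rpow_const fun _ _ ↦ Or.inr hp).mul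
    (ContinuousOn.rpow_const (by fun_prop) fun _ _ ↦ Or.inr hp)

lemma ofReal_intervalIntegral_eq_lintegral {a b : ℝ} {g : ℝ → ℝ} (hab : a ≤ b)
    (hg : ContinuousOn g (Icc a b)) (hg_nonneg : ∀ r ∈ Icc a b, 0 ≤ g r) :
    ENNReal.ofReal (∫ r in a..b, g r) = ∫⁻ r in Ioc a b, ENNReal.ofReal (g r) := by
  rw [intervalIntegral.integral_of_le hab, ofReal_integral_eq_lintegral_ofReal
    (hg.integrableOn_Icc.mono_set Ioc_subset_Icc_self)]
  filter_upwards [ae_restrict_mem measurableSet_Ioc] with r hr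
  exact hg_nonneg r (Ioc_subset_Icc_self hr)

lemma setLIntegral_Ioc_le_of_forall_Ioo {α : Type*} [LinearOrder α] [TopologicalSpace α]
    [OrderTopology α] [DenselyOrdered α] [FirstCountableTopology α] [MeasurableSpace α]
    {μ : Measure α} [NullSingletonClass μ] {a b : α} {g : α → ℝ≥0∞} {C : ℝ≥0∞} (hab : a < b)
    (hg : ∀ c ∈ Ioo a b, ∫⁻ r in Ioc a c, g r ∂μ ≤ C) : ∫⁻ r in Ioc a b, g r ∂μ ≤ C := by
  obtain ⟨v, hv_mono, hv_mem, hv_lim⟩ := exists_seq_strictMono_tendsto' hab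
  have hcover : Ioo a b ⊆ ⋃ n, Ioc a (v n) := fun r hr ↦ by
    obtain ⟨n, hn⟩ := (hv_lim.eventually (lt_mem_nhds hr.2)).exists
    exact mem_iUnion.2 ⟨n, hr.1, hn.le⟩
  have hdirected : Directed (· ⊆ ·) fun n ↦ Ioc a (v n) :=
    Monotone.directed_le fun _ _ hmn ↦ Ioc_subset_Ioc_right (hv_mono.monotone hmn)
  calc ∫⁻ r in Ioc a b, g r ∂μ = ∫⁻ r in Ioo a b, g r ∂μ := by rw [restrict_Ioo_eq_restrict_Ioc]
    _ ≤ ∫⁻ r in ⋃ n, Ioc a (v n), g r ∂μ := lintegral_mono_set hcover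
    _ = ⨆ n, ∫⁻ r in Ioc a (v n), g r ∂μ := setLIntegral_iUnion_of_directed g hdirected
    _ ≤ C := iSup_le fun n ↦ hg _ (hv_mem n)

section Hardy

variable {p a b T : ℝ}

/- Integrating the derivative of `2 * (T - r) * u r ^ p` produces `-2 * ∫ u ^ p` and a cross term
`2 * p * (T - r) * u' * u ^ (p - 1)`; splitting the latter costs only one copy of `∫ u ^ p`. -/
theorem integral_rpow_add_le_of_hasDerivAt {u u' : ℝ → ℝ} (hp : 1 ≤ p) (hab : a ≤ b) (hbT : b ≤ T)
    (hu : ContinuousOn u (Icc a b)) (hu_nonneg : ∀ r ∈ Icc a b, 0 ≤ u r)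
    (hderiv : ∀ r ∈ Ioo a b, HasDerivAt u (u' r) r)
    (hint : IntervalIntegrable (fun r ↦ |u' r| ^ p * (T - r) ^ p) volume a b) :
    (∫ r in a..b, u r ^ p) + 2 * (T - b) * u b ^ p ≤
      2 * (T - a) * u a ^ p + (2 * p) ^ p * ∫ r in a..b, |u' r| ^ p * (T - r) ^ p := by
  have hp0 : 0 ≤ p := by linarith
  have hu_rpow : ContinuousOn (fun r ↦ u r ^ p) (Icc a b) := hu.rpow_const fun _ _ ↦ Or.inr hp0
  have hu_int : IntervalIntegrable (fun r ↦ u r ^ p) volume a b :=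
    hu_rpow.intervalIntegrable_of_Icc hab
  have hweighted (r) (hr : r ∈ Ioo a b) : HasDerivAt (fun r ↦ 2 * (T - r) * u r ^ p)
      (-2 * u r ^ p + 2 * (T - r) * (u' r * p * u r ^ (p - 1))) r := by
    have hlin : HasDerivAt (fun r : ℝ ↦ 2 * (T - r)) (-2) r := by
      simpa using ((hasDerivAt_id r).const_sub T).const_mul 2
    exact hlin.mul ((hderiv r hr).rpow_const (Or.inr hp))
  have habsorb (r) (hr : r ∈ Ioo a b) :
      -2 * u r ^ p + 2 * (T - r) * (u' r * p * u r ^ (p - 1)) ≤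
        (2 * p) ^ p * (|u' r| ^ p * (T - r) ^ p) - u r ^ p := by
    have hTr : 0 ≤ T - r := by linarith [hr.2]
    have hur : 0 ≤ u r := hu_nonneg r (Ioo_subset_Icc_self hr)
    have hcross := mul_rpow_sub_one_le_rpow_add_rpow hp
      (by positivity : 0 ≤ 2 * p * (|u' r| * (T - r))) hur
    rw [Real.mul_rpow (by positivity) (by positivity), Real.mul_rpow (abs_nonneg _) hTr] at hcross
    have habs : 2 * (T - r) * (u' r * p * u r ^ (p - 1)) ≤
        2 * (T - r) * (|u' r| * p * u r ^ (p - 1)) := by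
      gcongr
      exact le_abs_self _
    linarith
  have hcont : ContinuousOn (fun r ↦ 2 * (T - r) * u r ^ p) (Icc a b) :=
    ContinuousOn.mul (by fun_prop) hu_rpow
  have hftc := intervalIntegral.sub_le_integral_of_hasDeriv_right_of_le hab hcont
    (fun r hr ↦ (hweighted r hr).hasDerivWithinAt)
    ((intervalIntegrable_iff_integrableOn_Icc_of_le hab).1 ((hint.const_mul _).sub hu_int)) habsorb
  rw [intervalIntegral.integral_sub (hint.const_mul _) hu_int,
    intervalIntegral.integral_const_mul] at hftc
  linarith

variable {E : Type*} [NormedAddCommGroup E] [NormedSpace ℝ E] {γ γ' : ℝ → E}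

lemma norm_le_norm_add_integral_norm_of_hasDerivAt (hab : a ≤ b)
    (hγ : ∀ r ∈ Icc a b, HasDerivAt γ (γ' r) r) (hγ' : ContinuousOn γ' (Icc a b)) :
    ‖γ b‖ ≤ ‖γ a‖ + ∫ r in a..b, ‖γ' r‖ := by
  have hIoo (r) (hr : r ∈ Ioo a b) : HasDerivAt γ (γ' r) r := hγ r (Ioo_subset_Icc_self hr)
  have hdist : ‖γ b - γ a‖ ≤ ∫ r in a..b, ‖γ' r‖ :=
    norm_sub_le_integral_of_norm_deriv_le_of_le hab
      (fun r hr ↦ (hγ r hr).continuousAt.continuousWithinAt)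
      (fun r hr ↦ (hIoo r hr).differentiableAt.differentiableWithinAt)
      (Eventually.of_forall fun r hr ↦ by rw [(hIoo r hr).deriv])
      (hγ'.norm.intervalIntegrable_of_Icc hab)
  exact (norm_le_norm_add_norm_sub' _ _).trans (by gcongr)

theorem integral_norm_rpow_add_le_of_hasDerivAt (hp : 1 ≤ p) (hab : a ≤ b) (hbT : b ≤ T)
    (hγ : ∀ r ∈ Icc a b, HasDerivAt γ (γ' r) r) (hγ' : ContinuousOn γ' (Icc a b)) :
    (∫ r in a..b, ‖γ r‖ ^ p) + 2 * (T - b) * ‖γ b‖ ^ p ≤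
      2 * (T - a) * ‖γ a‖ ^ p + (2 * p) ^ p * ∫ r in a..b, ‖γ' r‖ ^ p * (T - r) ^ p := by
  have hp0 : 0 ≤ p := by linarith
  set u : ℝ → ℝ := fun r ↦ ‖γ a‖ + ∫ s in a..r, ‖γ' s‖ with hu_def
  have hγu (r) (hr : r ∈ Icc a b) : ‖γ r‖ ≤ u r :=
    norm_le_norm_add_integral_norm_of_hasDerivAt hr.1 (fun s hs ↦ hγ s ⟨hs.1, hs.2.trans hr.2⟩)
      (hγ'.mono (Icc_subset_Icc_right hr.2))
  have hu : ContinuousOn u (Icc a b) := by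
    rw [← uIcc_of_le hab] at hγ' ⊢
    exact continuousOn_const.add
      (intervalIntegral.continuousOn_primitive_interval
        (hγ'.norm.integrableOn_compact isCompact_uIcc))
  have hderiv (r) (hr : r ∈ Ioo a b) : HasDerivAt u ‖γ' r‖ r :=
    (intervalIntegral.integral_hasDerivAt_right
      ((hγ'.mono (Icc_subset_Icc_right hr.2.le)).norm.intervalIntegrable_of_Icc hr.1.le)
      ((hγ'.mono Ioo_subset_Icc_self).norm.stronglyMeasurableAtFilter isOpen_Ioo r hr)
      (hγ'.norm.continuousAt (Icc_mem_nhds hr.1 hr.2))).const_add _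
  have hmono : ∫ r in a..b, ‖γ r‖ ^ p ≤ ∫ r in a..b, u r ^ p := by
    refine intervalIntegral.integral_mono_on hab ?_ ?_ fun r hr ↦ by gcongr; exact hγu r hr
    · exact ContinuousOn.intervalIntegrable_of_Icc hab <| ContinuousOn.rpow_const
        (fun r hr ↦ (hγ r hr).continuousAt.norm.continuousWithinAt) fun _ _ ↦ Or.inr hp0
    · exact (hu.rpow_const fun _ _ ↦ Or.inr hp0).intervalIntegrable_of_Icc hab
  have hend : 2 * (T - b) * ‖γ b‖ ^ p ≤ 2 * (T - b) * u b ^ p := by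
    have : 0 ≤ T - b := sub_nonneg.2 hbT
    gcongr
    exact hγu b (right_mem_Icc.2 hab)
  have hhardy := integral_rpow_add_le_of_hasDerivAt hp hab hbT hu
    (fun r hr ↦ (norm_nonneg _).trans (hγu r hr)) hderiv
    (by simpa only [abs_norm] using
      (continuousOn_norm_rpow_mul_sub_rpow hp0 hγ').intervalIntegrable_of_Icc hab)
  simp only [abs_norm] at hhardy
  have hua : u a = ‖γ a‖ := by simp [hu_def]
  rw [hua] at hhardy
  linarith

theorem lintegral_norm_rpow_add_le_of_hasDerivAt (hp : 1 ≤ p) (hab : a ≤ b) (hbT : b ≤ T)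
    (hγ : ∀ r ∈ Icc a b, HasDerivAt γ (γ' r) r) (hγ' : ContinuousOn γ' (Icc a b)) :
    (∫⁻ r in Ioc a b, ENNReal.ofReal (‖γ r‖ ^ p)) + 2 * ENNReal.ofReal ((T - b) * ‖γ b‖ ^ p) ≤
      2 * ENNReal.ofReal ((T - a) * ‖γ a‖ ^ p) + ENNReal.ofReal ((2 * p) ^ p) *
        ∫⁻ r in Ioc a b, ENNReal.ofReal (‖γ' r‖ ^ p * (T - r) ^ p) := by
  have hp0 : 0 ≤ p := by linarith
  have : 0 ≤ T - b := sub_nonneg.2 hbT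
  have hTa : 0 ≤ T - a := by linarith
  have hweight (r) (hr : r ∈ Icc a b) : 0 ≤ ‖γ' r‖ ^ p * (T - r) ^ p :=
    mul_nonneg (by positivity) (Real.rpow_nonneg (by linarith [hr.2]) p)
  have hγp : ContinuousOn (fun r ↦ ‖γ r‖ ^ p) (Icc a b) := ContinuousOn.rpow_const
    (fun r hr ↦ (hγ r hr).continuousAt.norm.continuousWithinAt) fun _ _ ↦ Or.inr hp0
  rw [← ofReal_intervalIntegral_eq_lintegral hab hγp fun _ _ ↦ by positivity,
    ← ofReal_intervalIntegral_eq_lintegral hab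
      (continuousOn_norm_rpow_mul_sub_rpow hp0 hγ') hweight,
    ← ENNReal.ofReal_ofNat 2, ← ENNReal.ofReal_mul (by positivity),
    ← ENNReal.ofReal_mul (by positivity), ← ENNReal.ofReal_mul (by positivity),
    ← ENNReal.ofReal_add (intervalIntegral.integral_nonneg hab fun _ _ ↦ by positivity)
      (by positivity),
    ← ENNReal.ofReal_add (by positivity)
      (mul_nonneg (by positivity) (intervalIntegral.integral_nonneg hab hweight))]
  refine ENNReal.ofReal_le_ofReal ?_
  simpa only [mul_assoc] using integral_norm_rpow_add_le_of_hasDerivAt hp hab hbT hγ hγ'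

theorem lintegral_norm_rpow_le_of_hasDerivAt (hp : 1 ≤ p) (haT : a < T)
    (hγ : ∀ r ∈ Ico a T, HasDerivAt γ (γ' r) r) (hγ' : ContinuousOn γ' (Ico a T)) :
    ∫⁻ r in Ioc a T, ENNReal.ofReal (‖γ r‖ ^ p) ≤
      2 * ENNReal.ofReal ((T - a) * ‖γ a‖ ^ p) + ENNReal.ofReal ((2 * p) ^ p) *
        ∫⁻ r in Ioc a T, ENNReal.ofReal (‖γ' r‖ ^ p * (T - r) ^ p) := by
  refine setLIntegral_Ioc_le_of_forall_Ioo haT fun b hb ↦ ?_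
  have hsub : Icc a b ⊆ Ico a T := Icc_subset_Ico_right hb.2
  have hhardy := lintegral_norm_rpow_add_le_of_hasDerivAt hp hb.1.le hb.2.le
    (fun r hr ↦ hγ r (hsub hr)) (hγ'.mono hsub)
  refine (le_self_add.trans hhardy).trans ?_
  gcongr
  exact hb.2.le

theorem ofReal_sub_mul_norm_sub_rpow_le_of_hasDerivAt (hp : 1 ≤ p) (hab : a ≤ b) (hbT : b ≤ T)
    (hγ : ∀ r ∈ Icc a b, HasDerivAt γ (γ' r) r) (hγ' : ContinuousOn γ' (Icc a b)) :
    ENNReal.ofReal ((T - b) * ‖γ b - γ a‖ ^ p) ≤ ENNReal.ofReal ((2 * p) ^ p) *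
      ∫⁻ r in Ioc a T, ENNReal.ofReal (‖γ' r‖ ^ p * (T - r) ^ p) := by
  have hhardy := lintegral_norm_rpow_add_le_of_hasDerivAt hp hab hbT
    (fun r hr ↦ (hγ r hr).sub_const (γ a)) hγ'
  rw [sub_self, norm_zero, Real.zero_rpow (by linarith), mul_zero, ENNReal.ofReal_zero, mul_zero,
    zero_add] at hhardy
  calc ENNReal.ofReal ((T - b) * ‖γ b - γ a‖ ^ p)
      ≤ 2 * ENNReal.ofReal ((T - b) * ‖γ b - γ a‖ ^ p) := le_mul_of_one_le_left' one_le_two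
    _ ≤ ENNReal.ofReal ((2 * p) ^ p) *
        ∫⁻ r in Ioc a b, ENNReal.ofReal (‖γ' r‖ ^ p * (T - r) ^ p) := le_add_self.trans hhardy
    _ ≤ ENNReal.ofReal ((2 * p) ^ p) *
        ∫⁻ r in Ioc a T, ENNReal.ofReal (‖γ' r‖ ^ p * (T - r) ^ p) := by gcongr

theorem ofReal_sub_mul_norm_rpow_le_of_hasDerivAt (hp : 1 ≤ p) (hab : a ≤ b) (hbT : b ≤ T)
    (hγ : ∀ r ∈ Icc a b, HasDerivAt γ (γ' r) r) (hγ' : ContinuousOn γ' (Icc a b)) :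
    ENNReal.ofReal ((T - b) * ‖γ b‖ ^ p) ≤ ENNReal.ofReal (2 ^ (p - 1)) *
      (ENNReal.ofReal ((2 * p) ^ p) *
          (∫⁻ r in Ioc a T, ENNReal.ofReal (‖γ' r‖ ^ p * (T - r) ^ p)) +
        ENNReal.ofReal ((T - b) * ‖γ a‖ ^ p)) := by
  have : 0 ≤ T - b := sub_nonneg.2 hbT
  have htriangle : (T - b) * ‖γ b‖ ^ p ≤
      2 ^ (p - 1) * ((T - b) * ‖γ b - γ a‖ ^ p + (T - b) * ‖γ a‖ ^ p) := by
    have hpow := norm_add_rpow_le hp (γ b - γ a) (γ a)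
    rw [sub_add_cancel] at hpow
    linear_combination (T - b) * hpow
  refine (ENNReal.ofReal_le_ofReal htriangle).trans ?_
  rw [ENNReal.ofReal_mul (by positivity), ENNReal.ofReal_add (by positivity) (by positivity)]
  gcongr
  exact ofReal_sub_mul_norm_sub_rpow_le_of_hasDerivAt hp hab hbT hγ hγ'

end Hardy

section Family

variable {ι E : Type*} [NormedAddCommGroup E] [NormedSpace ℝ E] {p c T : ℝ} {γ γ' : ι → ℝ → E}

theorem tendsto_iSup_sub_mul_norm_rpow_of_hasDerivAt (hp : 1 ≤ p) (hcT : c < T)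
    (hγ : ∀ i, ∀ r ∈ Ioo c T, HasDerivAt (γ i) (γ' i r) r)
    (hγ' : ∀ i, ContinuousOn (γ' i) (Ioo c T))
    (hbdd : ∀ a ∈ Ioo c T, BddAbove (range fun i ↦ ‖γ i a‖))
    (h : Tendsto (fun a ↦ ⨆ i, ∫⁻ r in Ioc a T, ENNReal.ofReal (‖γ' i r‖ ^ p * (T - r) ^ p))
      (𝓝[<] T) (𝓝 0)) :
    Tendsto (fun b ↦ ⨆ i, ENNReal.ofReal ((T - b) * ‖γ i b‖ ^ p)) (𝓝[<] T) (𝓝 0) := by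
  set S : ℝ → ℝ≥0∞ := fun a ↦ ⨆ i, ∫⁻ r in Ioc a T, ENNReal.ofReal (‖γ' i r‖ ^ p * (T - r) ^ p)
  set K : ℝ≥0∞ := ENNReal.ofReal (2 ^ (p - 1))
  set C : ℝ≥0∞ := ENNReal.ofReal ((2 * p) ^ p)
  have hbound (a) (ha : a ∈ Ioo c T) (M) (hM : ∀ i, ‖γ i a‖ ≤ M) (b) (hb : b ∈ Ico a T) :
      ⨆ i, ENNReal.ofReal ((T - b) * ‖γ i b‖ ^ p) ≤
        K * (C * S a + ENNReal.ofReal ((T - b) * M ^ p)) := by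
    refine iSup_le fun i ↦ ?_
    have : 0 ≤ T - b := sub_nonneg.2 hb.2.le
    have hsub : Icc a b ⊆ Ioo c T := Icc_subset_Ioo ha.1 hb.2
    refine (ofReal_sub_mul_norm_rpow_le_of_hasDerivAt hp hb.1 hb.2.le
      (fun r hr ↦ hγ i r (hsub hr)) ((hγ' i).mono hsub)).trans ?_
    gcongr
    exacts [le_iSup (fun i ↦ ∫⁻ r in Ioc a T, ENNReal.ofReal (‖γ' i r‖ ^ p * (T - r) ^ p)) i, hM i]
  have hlim_a : Tendsto (fun a ↦ K * (C * S a)) (𝓝[<] T) (𝓝 0) := by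
    simpa only [mul_zero] using ENNReal.Tendsto.const_mul
      (ENNReal.Tendsto.const_mul h (Or.inr ENNReal.ofReal_ne_top)) (Or.inr ENNReal.ofReal_ne_top)
  have hlim_b (L : ℝ≥0∞) (M : ℝ) :
      Tendsto (fun b ↦ K * (L + ENNReal.ofReal ((T - b) * M ^ p))) (𝓝[<] T) (𝓝 (K * L)) := by
    have hrem : Tendsto (fun b ↦ ENNReal.ofReal ((T - b) * M ^ p)) (𝓝[<] T) (𝓝 0) := by
      have hcont : Continuous fun b ↦ ENNReal.ofReal ((T - b) * M ^ p) :=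
        ENNReal.continuous_ofReal.comp (by fun_prop)
      simpa using (hcont.tendsto T).mono_left nhdsWithin_le_nhds
    simpa only [add_zero] using
      ENNReal.Tendsto.const_mul (tendsto_const_nhds.add hrem) (Or.inr ENNReal.ofReal_ne_top)
  refine ENNReal.tendsto_nhds_zero.2 fun ε hε ↦ ?_
  obtain ⟨a, haε, ha⟩ := ((hlim_a.eventually_lt_const hε).and (Ioo_mem_nhdsLT hcT)).exists
  obtain ⟨M, hM⟩ := hbdd a ha
  filter_upwards [(hlim_b (C * S a) M).eventually_lt_const haε, Ico_mem_nhdsLT ha.2] with b hbε hb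
  exact (hbound a ha M (fun i ↦ hM (mem_range_self i)) b hb).trans hbε.le

theorem tendsto_iSup_lintegral_norm_rpow_of_hasDerivAt (hp : 1 ≤ p) (hcT : c < T)
    (hγ : ∀ i, ∀ r ∈ Ioo c T, HasDerivAt (γ i) (γ' i r) r)
    (hγ' : ∀ i, ContinuousOn (γ' i) (Ioo c T))
    (hbdd : ∀ a ∈ Ioo c T, BddAbove (range fun i ↦ ‖γ i a‖))
    (h : Tendsto (fun a ↦ ⨆ i, ∫⁻ r in Ioc a T, ENNReal.ofReal (‖γ' i r‖ ^ p * (T - r) ^ p))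
      (𝓝[<] T) (𝓝 0)) :
    Tendsto (fun a ↦ ⨆ i, ∫⁻ r in Ioc a T, ENNReal.ofReal (‖γ i r‖ ^ p)) (𝓝[<] T) (𝓝 0) := by
  have hupper := (ENNReal.Tendsto.const_mul
      (tendsto_iSup_sub_mul_norm_rpow_of_hasDerivAt hp hcT hγ hγ' hbdd h)
      (Or.inr (ENNReal.ofNat_ne_top (n := 2)))).add
    (ENNReal.Tendsto.const_mul h (Or.inr (ENNReal.ofReal_ne_top (r := (2 * p) ^ p))))
  rw [mul_zero, mul_zero, add_zero] at hupper
  refine tendsto_of_tendsto_of_tendsto_of_le_of_le' tendsto_const_nhds hupper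
    (Eventually.of_forall fun _ ↦ zero_le) ?_
  filter_upwards [Ioo_mem_nhdsLT hcT] with a ha
  refine iSup_le fun i ↦ ?_
  have hsub : Ico a T ⊆ Ioo c T := fun r hr ↦ ⟨ha.1.trans_le hr.1, hr.2⟩
  refine (lintegral_norm_rpow_le_of_hasDerivAt hp ha.2 (fun r hr ↦ hγ i r (hsub hr))
    ((hγ' i).mono hsub)).trans ?_
  gcongr
  exacts [le_iSup (fun i ↦ ENNReal.ofReal ((T - a) * ‖γ i a‖ ^ p)) i,
    le_iSup (fun i ↦ ∫⁻ r in Ioc a T, ENNReal.ofReal (‖γ' i r‖ ^ p * (T - r) ^ p)) i]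

end Family

section Disc

lemma norm_circ (r θ : ℝ) : ‖circ r θ‖ = |r| := by
  rw [circ, norm_mul, Complex.norm_exp_ofReal_mul_I, mul_one, Complex.norm_real, Real.norm_eq_abs]

lemma circ_mem_ball {r : ℝ} (hr : r ∈ Ioo (-1 : ℝ) 1) (θ : ℝ) : circ r θ ∈ ball (0 : ℂ) 1 := by
  rwa [mem_ball_zero_iff, norm_circ, abs_lt]

lemma hasDerivAt_circ (r θ : ℝ) :
    HasDerivAt (fun s ↦ circ s θ) (Complex.exp (θ * Complex.I)) r := by
  simpa only [circ, id_eq, one_mul, Complex.ofReal_one] using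
    (hasDerivAt_id r).ofReal_comp.mul_const (Complex.exp (θ * Complex.I))

lemma bddAbove_range_norm_comp_circ {E : Type*} [SeminormedAddCommGroup E] {f : ℂ → E}
    (hf : ContinuousOn f (ball 0 1)) {r : ℝ} (hr : r ∈ Ioo (-1 : ℝ) 1) :
    BddAbove (range fun θ ↦ ‖f (circ r θ)‖) := by
  obtain ⟨M, hM⟩ := (isCompact_sphere (0 : ℂ) |r|).exists_bound_of_continuousOn
    (hf.mono (sphere_subset_ball (abs_lt.2 hr)))
  exact ⟨M, forall_mem_range.2 fun θ ↦ hM _ (mem_sphere_zero_iff_norm.2 (norm_circ r θ))⟩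

variable {E : Type*} [NormedAddCommGroup E] [NormedSpace ℂ E] {f : ℂ → E}

lemma hasDerivAt_comp_circ (hf : DifferentiableOn ℂ f (ball 0 1)) {r : ℝ}
    (hr : r ∈ Ioo (-1 : ℝ) 1) (θ : ℝ) :
    HasDerivAt (fun s ↦ f (circ s θ)) (Complex.exp (θ * Complex.I) • deriv f (circ r θ)) r :=
  (hf.hasDerivAt (isOpen_ball.mem_nhds (circ_mem_ball hr θ))).scomp r (hasDerivAt_circ r θ)

lemma continuousOn_exp_smul_deriv_comp_circ [CompleteSpace E]
    (hf : DifferentiableOn ℂ f (ball 0 1)) (θ : ℝ) :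
    ContinuousOn (fun r ↦ Complex.exp (θ * Complex.I) • deriv f (circ r θ)) (Ioo (-1) 1) :=
  ((hf.deriv isOpen_ball).continuousOn.comp
    (fun r _ ↦ (hasDerivAt_circ r θ).continuousAt.continuousWithinAt)
    fun _ hr ↦ circ_mem_ball hr θ).const_smul _

end Disc

theorem stmt3_general {E : Type*} [NormedAddCommGroup E] [NormedSpace ℂ E] [CompleteSpace E]
    (p : ℝ) (hp : 1 ≤ p) (f : ℂ → E) (hf : DifferentiableOn ℂ f (ball (0 : ℂ) 1))
    (h : Tendsto (fun ρ : ℝ ↦ ⨆ θ : ℝ,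
        (∫⁻ r in Ioc ρ 1, ENNReal.ofReal (‖deriv f (circ r θ)‖ ^ p * (1 - r) ^ p)) ^ (1 / p))
      (𝓝[<] 1) (𝓝 0)) :
    Tendsto (fun ρ : ℝ ↦ ⨆ θ : ℝ, ENNReal.ofReal ((1 - ρ) ^ (1 / p) * ‖f (circ ρ θ)‖))
        (𝓝[<] 1) (𝓝 0) ∧
      Tendsto (fun ρ : ℝ ↦ ⨆ θ : ℝ,
        (∫⁻ r in Ioc ρ 1, ENNReal.ofReal (‖f (circ r θ)‖ ^ p)) ^ (1 / p)) (𝓝[<] 1) (𝓝 0) := by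
  have hp0 : 0 < p := by linarith
  have hroot : 0 < 1 / p := one_div_pos.2 hp0
  have hγ (θ : ℝ) := fun r hr ↦ hasDerivAt_comp_circ hf (r := r) hr θ
  have hγ' := continuousOn_exp_smul_deriv_comp_circ hf
  have hbdd := fun r ↦ bddAbove_range_norm_comp_circ hf.continuousOn (r := r)
  have htail : Tendsto (fun ρ : ℝ ↦ ⨆ θ : ℝ, ∫⁻ r in Ioc ρ 1, ENNReal.ofReal
      (‖Complex.exp (θ * Complex.I) • deriv f (circ r θ)‖ ^ p * (1 - r) ^ p)) (𝓝[<] 1) (𝓝 0) := by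
    simpa only [norm_smul, Complex.norm_exp_ofReal_mul_I, one_mul] using
      (tendsto_iSup_rpow_zero_iff hroot).1 h
  have hgrowth := tendsto_iSup_sub_mul_norm_rpow_of_hasDerivAt hp (by norm_num) hγ hγ' hbdd htail
  have hmean := tendsto_iSup_lintegral_norm_rpow_of_hasDerivAt hp (by norm_num) hγ hγ' hbdd htail
  refine ⟨((tendsto_iSup_rpow_zero_iff hroot).2 hgrowth).congr' ?_,
    (tendsto_iSup_rpow_zero_iff hroot).2 hmean⟩
  filter_upwards [self_mem_nhdsWithin] with ρ (hρ : ρ < 1)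
  simp only [ofReal_mul_rpow_rpow_one_div (sub_nonneg.2 hρ.le) (norm_nonneg _) hp0]

/-- Let `1 ≤ p < ∞` and `f` analytic on the unit disc. If
`lim_{ρ→1⁻} sup_θ (∫_ρ¹ |f'(re^{iθ})|^p (1-r)^p dr)^{1/p} = 0`, then
`lim_{ρ→1⁻} sup_θ (1-ρ)^{1/p} |f(ρe^{iθ})| = 0` and `f ∈ RM(p,0)`. -/
theorem stmt3 (p : ℝ) (hp : 1 ≤ p) (f : ℂ → ℂ)
    (hf : DifferentiableOn ℂ f (ball (0:ℂ) 1))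
    (h : Tendsto
      (fun ρ : ℝ => ⨆ θ : ℝ,
        (∫⁻ r in Ioc ρ 1, ENNReal.ofReal (‖deriv f (circ r θ)‖ ^ p * (1-r) ^ p)) ^ (1/p))
      (nhdsWithin 1 (Iio (1:ℝ))) (nhds 0)) :
    Tendsto (fun ρ : ℝ => ⨆ θ : ℝ, ENNReal.ofReal ((1-ρ) ^ (1/p) * ‖f (circ ρ θ)‖))
        (nhdsWithin 1 (Iio (1:ℝ))) (nhds 0) ∧
      memRMp0 p f := by
  obtain ⟨hgrowth, hmean⟩ := stmt3_general p hp f hf h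
  exact ⟨hgrowth, hf, hmean⟩
end

section
/- Let X be a complex Banach space, let μ be a positive finite measure on a measurable space Ω, and let T : X → L¹(μ) be a bounded linear operator. If T is not weakly compact (i.e. the image T(B_X) of the closed unit ball B_X of X is not relatively compact in the weak topology of L¹(μ)), then T fixes a copy of ℓ¹: there exist a sequence {x_n} in B_X and a constant δ > 0 such that for every n and all complex scalars α₁,…,α_n one has δ·Σ_{k=1}^n |α_k| ≤ ‖T(Σ_{k=1}^n α_k x_k)‖_{L¹(μ)}. -/
/-
A bounded family in `L¹` is either uniformly integrable or contains an `ℓ¹` basic sequence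
(Kadec–Pełczyński).

If it is uniformly integrable, truncation brings it within any `ε` of a bounded subset of `L²`,
whose image in `L¹` is relatively weakly compact. By Banach–Alaoglu, the weak-* closure of the
family in the bidual then lies within `ε` of `L¹` for every `ε`, hence in `L¹` (Grothendieck).

Otherwise its modulus of uniform integrability `η` is positive, and there are members `f n` carrying
almost all of `η` on sets `A n` of summable measure. Along a sparse subsequence, removing from each
`A n` all the later sets makes them disjoint and costs little mass, while each `f n` has mass at
most `5η/4` on their union, which has small measure. Integrating
`2 * ‖v k‖ ≤ ‖∑ j, v j‖ + ∑ j, ‖v j‖` with `v j = α j • f j` over the `k`-th set and summing over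
`k` gives the lower `ℓ¹` constant `2 · 3η/4 - 5η/4 = η/4`.
-/

open MeasureTheory Metric

open Filter Topology Function
open scoped ENNReal NNReal Pointwise

section WeakCompactness

variable {𝕜 E F H : Type*} [RCLike 𝕜]
  [NormedAddCommGroup E] [NormedSpace 𝕜 E] [NormedAddCommGroup F] [NormedSpace 𝕜 F]
  [NormedAddCommGroup H] [InnerProductSpace 𝕜 H] [CompleteSpace H]

theorem isCompact_closure_image_toWeakSpace_map (L : E →L[𝕜] F) {S : Set E}
    (hS : IsCompact (closure (toWeakSpace 𝕜 E '' S))) :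
    IsCompact (closure (toWeakSpace 𝕜 F '' (L '' S))) := by
  refine (hS.image (WeakSpace.map L).continuous).closure_of_subset ?_
  rintro _ ⟨_, ⟨x, hx, rfl⟩, rfl⟩
  exact ⟨_, subset_closure ⟨x, hx, rfl⟩, rfl⟩

theorem mem_range_inclusionInDoubleDual_of_forall_exists_norm_sub_lt [CompleteSpace E]
    {ψ : StrongDual 𝕜 (StrongDual 𝕜 E)}
    (h : ∀ ε > 0, ∃ x : E, ‖ψ - NormedSpace.inclusionInDoubleDual 𝕜 E x‖ < ε) :
    ψ ∈ Set.range (NormedSpace.inclusionInDoubleDual 𝕜 E) := by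
  have hclosed : IsClosed (Set.range (NormedSpace.inclusionInDoubleDualLi 𝕜 (E := E))) :=
    (NormedSpace.inclusionInDoubleDualLi
      𝕜 (E := E)).isometry.isUniformInducing.isComplete_range.isClosed
  refine hclosed.closure_subset
    ((Metric.mem_closure_range_iff (α := StrongDual 𝕜 (StrongDual 𝕜 E))).2 fun ε hε => ?_)
  obtain ⟨x, hx⟩ := h ε hε
  exact ⟨x, (dist_eq_norm (E := StrongDual 𝕜 (StrongDual 𝕜 E)) _ _).trans_lt hx⟩

theorem inclusionInDoubleDual_surjective_of_innerProductSpace :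
    Surjective (NormedSpace.inclusionInDoubleDual 𝕜 H) := by
  intro ψ
  let ψconj : StrongDual 𝕜 H := ((starL 𝕜 : 𝕜 ≃L⋆[𝕜] 𝕜) : 𝕜 →L⋆[𝕜] 𝕜).comp
    (ψ.comp ((InnerProductSpace.toDual 𝕜 H).toContinuousLinearEquiv : H →L⋆[𝕜] StrongDual 𝕜 H))
  refine ⟨(InnerProductSpace.toDual 𝕜 H).symm ψconj, ContinuousLinearMap.ext fun l => ?_⟩
  obtain ⟨w, rfl⟩ := (InnerProductSpace.toDual 𝕜 H).surjective l
  rw [NormedSpace.dual_def, InnerProductSpace.toDual_apply_apply, ← inner_conj_symm,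
    InnerProductSpace.toDual_symm_apply]
  exact star_star _

theorem isCompact_closure_toWeakSpace_of_isBounded {S : Set H} (hS : Bornology.IsBounded S) :
    IsCompact (closure (toWeakSpace 𝕜 H '' S)) := by
  apply NormedSpace.isCompact_closure_of_isBounded
  · rwa [Set.preimage_image_eq _ (toWeakSpace 𝕜 H).injective]
  · intro ψ _
    obtain ⟨x, hx⟩ := inclusionInDoubleDual_surjective_of_innerProductSpace
      (WeakDual.toStrongDual ψ)
    exact ⟨toWeakSpace 𝕜 H x, WeakDual.toStrongDual.injective hx⟩

theorem exists_norm_sub_inclusionInDoubleDual_le {S K : Set E} {ε : ℝ}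
    (hK : IsCompact (closure (toWeakSpace 𝕜 E '' K)))
    (hSK : ∀ f ∈ S, ∃ g ∈ K, ‖f - g‖ ≤ ε) {ψ : WeakDual 𝕜 (StrongDual 𝕜 E)}
    (hψ : ψ ∈ closure (NormedSpace.inclusionInDoubleDualWeak 𝕜 E '' (toWeakSpace 𝕜 E '' S))) :
    ∃ x : E, ‖WeakDual.toStrongDual ψ - NormedSpace.inclusionInDoubleDual 𝕜 E x‖ ≤ ε := by
  let J := NormedSpace.inclusionInDoubleDualWeak 𝕜 E
  let B : Set (WeakDual 𝕜 (StrongDual 𝕜 E)) := WeakDual.toStrongDual ⁻¹' closedBall 0 ε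
  have hclosed : IsClosed (J '' closure (toWeakSpace 𝕜 E '' K) + B) :=
    ((hK.image J.continuous).add (WeakDual.isCompact_closedBall 0 ε)).isClosed
  have hsub : J '' (toWeakSpace 𝕜 E '' S) ⊆ J '' closure (toWeakSpace 𝕜 E '' K) + B := by
    rintro _ ⟨_, ⟨f, hf, rfl⟩, rfl⟩
    obtain ⟨g, hg, hfg⟩ := hSK f hf
    refine ⟨_, ⟨_, subset_closure ⟨g, hg, rfl⟩, rfl⟩, J (toWeakSpace 𝕜 E (f - g)), ?_, ?_⟩
    · exact (mem_closedBall_zero_iff (E := StrongDual 𝕜 (StrongDual 𝕜 E))).2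
        ((NormedSpace.double_dual_bound 𝕜 E (f - g)).trans hfg)
    · simp [J]
  obtain ⟨_, ⟨x, -, rfl⟩, r, hr, rfl⟩ := closure_minimal hsub hclosed hψ
  refine ⟨(toWeakSpace 𝕜 E).symm x, ?_⟩
  exact (congrArg norm (add_sub_cancel_left (G := StrongDual 𝕜 (StrongDual 𝕜 E)) _ _)).trans_le
    ((mem_closedBall_zero_iff (E := StrongDual 𝕜 (StrongDual 𝕜 E))).1 hr)

theorem isCompact_closure_toWeakSpace_of_forall_exists_norm_sub_le [CompleteSpace E] {S : Set E}
    (hS : Bornology.IsBounded S)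
    (h : ∀ ε > 0, ∃ K : Set E, IsCompact (closure (toWeakSpace 𝕜 E '' K)) ∧
      ∀ f ∈ S, ∃ g ∈ K, ‖f - g‖ ≤ ε) :
    IsCompact (closure (toWeakSpace 𝕜 E '' S)) := by
  apply NormedSpace.isCompact_closure_of_isBounded
  · rwa [Set.preimage_image_eq _ (toWeakSpace 𝕜 E).injective]
  · intro ψ hψ
    obtain ⟨x, hx⟩ := mem_range_inclusionInDoubleDual_of_forall_exists_norm_sub_lt
        (ψ := WeakDual.toStrongDual ψ) fun ε hε => by
      obtain ⟨K, hK, hSK⟩ := h (ε / 2) (half_pos hε)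
      obtain ⟨x, hx⟩ := exists_norm_sub_inclusionInDoubleDual_le hK hSK hψ
      exact ⟨x, hx.trans_lt (half_lt_self hε)⟩
    exact ⟨toWeakSpace 𝕜 E x, WeakDual.toStrongDual.injective hx⟩

end WeakCompactness

section UniformIntegrability

variable {Ω E : Type*} [MeasurableSpace Ω] {μ : Measure Ω} [IsFiniteMeasure μ]
  [NormedAddCommGroup E] {p q : ℝ≥0∞}

theorem one_div_toReal_le_one_div_toReal (hp : p ≠ 0) (hpq : p ≤ q) :
    1 / q.toReal ≤ 1 / p.toReal := by
  rcases eq_or_ne q ∞ with rfl | hq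
  · simp
  · exact one_div_le_one_div_of_le (ENNReal.toReal_pos hp (ne_top_of_le_ne_top hq hpq))
      (ENNReal.toReal_mono hq hpq)

theorem norm_inclusion_antitone_le (hp : p ≠ 0) (hpq : p ≤ q) (v : Lp E q μ) :
    ‖AddSubgroup.inclusion (Lp.antitone (E := E) (μ := μ) hpq) v‖ ≤
      μ.real Set.univ ^ (1 / p.toReal - 1 / q.toReal) * ‖v‖ := by
  have hle := eLpNorm_le_eLpNorm_mul_rpow_measure_univ hpq (Lp.aestronglyMeasurable v)
  have hexp := sub_nonneg.2 (one_div_toReal_le_one_div_toReal hp hpq)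
  have hfin : μ Set.univ ^ (1 / p.toReal - 1 / q.toReal) ≠ ∞ :=
    ENNReal.rpow_ne_top_of_nonneg hexp (measure_ne_top μ _)
  have hnorm := ENNReal.toReal_mono (ENNReal.mul_ne_top (Lp.eLpNorm_ne_top v) hfin) hle
  rw [ENNReal.toReal_mul, ← ENNReal.toReal_rpow, mul_comm] at hnorm
  exact hnorm

/-- The inclusion of `L^q` into `L^p` for `p ≤ q` over a finite measure, as a continuous linear map;
it transports weak compactness from `L²` to `L¹`. -/
noncomputable def lpInclusionCLM (𝕜 : Type*) [NormedField 𝕜] [NormedSpace 𝕜 E]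
    [Fact (1 ≤ p)] [Fact (1 ≤ q)] (hpq : p ≤ q) : Lp E q μ →L[𝕜] Lp E p μ :=
  LinearMap.mkContinuous
    { toAddHom := (AddSubgroup.inclusion (Lp.antitone hpq)).toAddHom
      map_smul' := fun _ _ => rfl }
    (μ.real Set.univ ^ (1 / p.toReal - 1 / q.toReal))
    (norm_inclusion_antitone_le (one_pos.trans_le Fact.out).ne' hpq)

theorem coeFn_lpInclusionCLM (𝕜 : Type*) [NormedField 𝕜] [NormedSpace 𝕜 E]
    [Fact (1 ≤ p)] [Fact (1 ≤ q)] (hpq : p ≤ q) (v : Lp E q μ) :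
    (lpInclusionCLM 𝕜 hpq v : Ω → E) = v := rfl

theorem exists_norm_le_enorm_sub_lpInclusionCLM_le (𝕜 : Type*) [NormedField 𝕜] [NormedSpace 𝕜 E]
    [Fact (1 ≤ p)] [Fact (1 ≤ q)] (hpq : p ≤ q) (f : Lp E p μ) (M : ℝ≥0) :
    ∃ v : Lp E q μ, ‖v‖ ≤ measureUnivNNReal μ ^ q.toReal⁻¹ * M ∧
      ‖f - lpInclusionCLM 𝕜 hpq v‖ₑ ≤ eLpNorm ({x | M ≤ ‖f x‖₊}.indicator f) p μ := by
  have hmeas : StronglyMeasurable f := Lp.stronglyMeasurable f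
  set A : Set Ω := {x | M ≤ ‖f x‖₊}
  have hA : MeasurableSet A := measurableSet_le measurable_const hmeas.nnnorm.measurable
  have hbound : ∀ x, ‖Aᶜ.indicator f x‖ ≤ M := fun x => by
    by_cases hx : x ∈ A
    · simp [hx]
    · simpa [hx] using (not_le.1 hx).le
  have hv : MemLp (Aᶜ.indicator f) q μ :=
    .of_bound (hmeas.indicator hA.compl).aestronglyMeasurable M (.of_forall hbound)
  refine ⟨hv.toLp, Lp.norm_le_of_ae_bound M.2 ?_, ?_⟩
  · filter_upwards [hv.coeFn_toLp] with x hx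
    exact hx ▸ hbound x
  · rw [Lp.enorm_def]
    refine (eLpNorm_congr_ae ?_).le
    filter_upwards [Lp.coeFn_sub f (lpInclusionCLM 𝕜 hpq hv.toLp), hv.coeFn_toLp] with x hsub hx
    rw [hsub, Pi.sub_apply, coeFn_lpInclusionCLM, hx, ← Pi.sub_apply, Set.indicator_compl,
      sub_sub_cancel]

theorem isCompact_closure_toWeakSpace_range_of_uniformIntegrable {ι 𝕜 E : Type*} [RCLike 𝕜]
    [NormedAddCommGroup E] [InnerProductSpace 𝕜 E] [CompleteSpace E] {f : ι → Lp E 1 μ}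
    (hf : UniformIntegrable (fun i => (f i : Ω → E)) 1 μ) :
    IsCompact (closure (toWeakSpace 𝕜 (Lp E 1 μ) '' Set.range f)) := by
  obtain ⟨C, hC⟩ := hf.2.2
  have hbdd : Bornology.IsBounded (Set.range f) := isBounded_iff_forall_norm_le.2
    ⟨C, Set.forall_mem_range.2 fun i => ENNReal.toReal_le_coe_of_le_coe (hC i)⟩
  refine isCompact_closure_toWeakSpace_of_forall_exists_norm_sub_le hbdd fun ε hε => ?_
  obtain ⟨M, hM⟩ := hf.spec one_ne_zero ENNReal.one_ne_top hε
  refine ⟨lpInclusionCLM 𝕜 (one_le_two : (1 : ℝ≥0∞) ≤ 2) ''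
      closedBall 0 (measureUnivNNReal μ ^ (2 : ℝ≥0∞).toReal⁻¹ * M),
    isCompact_closure_image_toWeakSpace_map _
      (isCompact_closure_toWeakSpace_of_isBounded isBounded_closedBall),
    Set.forall_mem_range.2 fun i => ?_⟩
  obtain ⟨v, hv, hfv⟩ := exists_norm_le_enorm_sub_lpInclusionCLM_le 𝕜 one_le_two (f i) M
  refine ⟨_, ⟨v, mem_closedBall_zero_iff.2 hv, rfl⟩, ?_⟩
  rw [← toReal_enorm]
  exact ENNReal.toReal_le_of_le_ofReal hε.le (hfv.trans (hM i))

end UniformIntegrability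

section Modulus

variable {Ω E ι : Type*} [MeasurableSpace Ω] {μ : Measure Ω} [NormedAddCommGroup E]
  {p : ℝ≥0∞} {f : ι → Ω → E} {a b : ℝ≥0∞}

/-- The modulus of uniform integrability of a family `f`: the limit as `δ → 0` of the largest `L^p`
norm of a member of `f` on a set of measure at most `δ`. It measures how far `f` is from being
uniformly integrable, and `δ` is real in order to match `UnifIntegrable`. -/
noncomputable def unifIntegrableModulus (f : ι → Ω → E) (p : ℝ≥0∞) (μ : Measure Ω) : ℝ≥0∞ :=
  ⨅ (δ : ℝ) (_ : 0 < δ), ⨆ (i) (s) (_ : MeasurableSet s) (_ : μ s ≤ ENNReal.ofReal δ),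
    eLpNorm (s.indicator (f i)) p μ

theorem exists_forall_eLpNorm_indicator_le (hb : unifIntegrableModulus f p μ < b) :
    ∃ δ : ℝ, 0 < δ ∧ ∀ i s, MeasurableSet s → μ s ≤ ENNReal.ofReal δ →
      eLpNorm (s.indicator (f i)) p μ ≤ b := by
  simp only [unifIntegrableModulus, iInf_lt_iff] at hb
  obtain ⟨δ, hδ, hlt⟩ := hb
  exact ⟨δ, hδ, by simpa only [iSup_le_iff] using hlt.le⟩

theorem exists_lt_eLpNorm_indicator (ha : a < unifIntegrableModulus f p μ) {δ : ℝ} (hδ : 0 < δ) :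
    ∃ i s, MeasurableSet s ∧ μ s ≤ ENNReal.ofReal δ ∧ a < eLpNorm (s.indicator (f i)) p μ := by
  simpa only [lt_iSup_iff, exists_prop] using ha.trans_le (iInf₂_le δ hδ)

theorem unifIntegrable_of_unifIntegrableModulus_eq_zero (h : unifIntegrableModulus f p μ = 0) :
    UnifIntegrable f p μ := fun ε hε => by
  obtain ⟨δ, hδ, hle⟩ := exists_forall_eLpNorm_indicator_le
    (h.trans_lt (ENNReal.ofReal_pos.2 hε))
  exact ⟨δ, hδ, hle⟩

theorem unifIntegrableModulus_le (hb : ∀ i, eLpNorm (f i) p μ ≤ b) :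
    unifIntegrableModulus f p μ ≤ b :=
  (iInf₂_le 1 one_pos).trans <| iSup_le fun i => iSup_le fun _ => iSup₂_le fun _ _ =>
    (eLpNorm_indicator_le _).trans (hb i)

end Modulus

section GlidingHump

variable {Ω E ι : Type*} [MeasurableSpace Ω] {μ : Measure Ω} [NormedAddCommGroup E]

theorem tendsto_measure_iUnion_add_atTop_zero {A : ℕ → Set Ω} (hA : ∑' n, μ (A n) ≠ ∞) :
    Tendsto (fun n => μ (⋃ k, A (k + n))) atTop (𝓝 0) :=
  tendsto_of_tendsto_of_tendsto_of_le_of_le tendsto_const_nhds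
    (ENNReal.tendsto_sum_nat_add _ hA) (fun _ => zero_le) fun _ => measure_iUnion_le _

theorem exists_strictMono_lintegral_iUnion_add_le {g : ℕ → Ω → ℝ≥0∞} {A : ℕ → Set Ω}
    (hg : ∀ n, ∫⁻ x, g n x ∂μ ≠ ∞) (hA : ∑' n, μ (A n) ≠ ∞)
    {ε δ : ℝ≥0∞} (hε : 0 < ε) (hδ : 0 < δ) :
    ∃ φ : ℕ → ℕ, StrictMono φ ∧ μ (⋃ k, A (k + φ 0)) ≤ δ ∧
      ∀ n, ∫⁻ x in ⋃ k, A (k + φ (n + 1)), g (φ n) x ∂μ ≤ ε := by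
  have htail := tendsto_measure_iUnion_add_atTop_zero hA
  have hint (m : ℕ) : ∀ᶠ n in atTop, ∫⁻ x in ⋃ k, A (k + n), g m x ∂μ ≤ ε :=
    (tendsto_setLIntegral_zero (hg m) htail).eventually_le_const hε
  obtain ⟨φ, hφδ, hφ⟩ := exists_seq_of_forall_finset_exists
    (fun n => μ (⋃ k, A (k + n)) ≤ δ)
    (fun m n => m < n ∧ ∫⁻ x in ⋃ k, A (k + n), g m x ∂μ ≤ ε) fun s _ =>
      ((htail.eventually_le_const hδ).and ((eventually_all_finset s).2 fun m _ =>
        (eventually_gt_atTop m).and (hint m))).exists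
  exact ⟨φ, fun m n hmn => (hφ m n hmn).1, hφδ 0, fun n => (hφ n (n + 1) n.lt_succ_self).2⟩

theorem subset_iUnion_add {α : Type*} (A : ℕ → Set α) {m n : ℕ} (hmn : m ≤ n) :
    A n ⊆ ⋃ k, A (k + m) :=
  Set.subset_iUnion_of_subset (n - m) (by rw [Nat.sub_add_cancel hmn])

theorem pairwise_disjoint_sdiff_iUnion_add {α : Type*} (A : ℕ → Set α) {φ : ℕ → ℕ}
    (hφ : StrictMono φ) : Pairwise (Disjoint on fun n => A (φ n) \ ⋃ k, A (k + φ (n + 1))) :=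
  (pairwise_disjoint_on _).2 fun _ _ hmn => Set.disjoint_sdiff_left.mono_right <|
    Set.sdiff_subset.trans <| subset_iUnion_add A <| hφ.monotone <| Nat.succ_le_of_lt hmn

theorem eLpNorm_one_indicator_eq_setLIntegral_enorm (f : Ω → E) {s : Set Ω}
    (hs : MeasurableSet s) : eLpNorm (s.indicator f) 1 μ = ∫⁻ x in s, ‖f x‖ₑ ∂μ := by
  rw [eLpNorm_indicator_eq_eLpNorm_restrict hs, eLpNorm_one_eq_lintegral_enorm]

theorem le_setLIntegral_sdiff {g : Ω → ℝ≥0∞} {s t : Set Ω} {a ε : ℝ≥0∞} (hε : ε ≠ ∞)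
    (hs : a + ε ≤ ∫⁻ x in s, g x ∂μ) (ht : ∫⁻ x in t, g x ∂μ ≤ ε) :
    a ≤ ∫⁻ x in s \ t, g x ∂μ :=
  ENNReal.le_of_add_le_add_right hε <| calc
    a + ε ≤ ∫⁻ x in s, g x ∂μ := hs
    _ ≤ ∫⁻ x in s \ t ∪ t, g x ∂μ := lintegral_mono_set (Set.subset_sdiff_union s t)
    _ ≤ ∫⁻ x in s \ t, g x ∂μ + ∫⁻ x in t, g x ∂μ := lintegral_union_le g (s \ t) t
    _ ≤ ∫⁻ x in s \ t, g x ∂μ + ε := by gcongr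

theorem exists_pairwise_disjoint_le_setLIntegral {f : ι → Ω → E} (hf : ∀ i, MemLp (f i) 1 μ)
    {a b : ℝ≥0∞} (ha : a < unifIntegrableModulus f 1 μ) (hb : unifIntegrableModulus f 1 μ < b) :
    ∃ (i : ℕ → ι) (s : ℕ → Set Ω), (∀ n, MeasurableSet (s n)) ∧ Pairwise (Disjoint on s) ∧
      (∀ n, a ≤ ∫⁻ x in s n, ‖f (i n) x‖ₑ ∂μ) ∧
      ∀ n, ∫⁻ x in ⋃ k, s k, ‖f (i n) x‖ₑ ∂μ ≤ b := by
  obtain ⟨c, hac, hc⟩ := exists_between ha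
  obtain ⟨δ, hδ, hle⟩ := exists_forall_eLpNorm_indicator_le hb
  choose i A hA hμA hlt using fun n : ℕ =>
    exists_lt_eLpNorm_indicator hc (show (0 : ℝ) < (1 / 2) ^ n by positivity)
  have hsum : ∑' n, μ (A n) ≠ ∞ :=
    ne_top_of_le_ne_top summable_geometric_two.tsum_ofReal_ne_top (ENNReal.tsum_le_tsum hμA)
  obtain ⟨φ, hφ, hφδ, hφε⟩ := exists_strictMono_lintegral_iUnion_add_le
    (g := fun n x => ‖f (i n) x‖ₑ) (fun n => (memLp_one_iff_integrable.1 (hf (i n))).2.ne) hsum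
    (tsub_pos_of_lt hac) (ENNReal.ofReal_pos.2 hδ)
  let s (n : ℕ) : Set Ω := A (φ n) \ ⋃ k, A (k + φ (n + 1))
  have hs (n : ℕ) : MeasurableSet (s n) := (hA _).diff (.iUnion fun _ => hA _)
  have hμs : μ (⋃ n, s n) ≤ ENNReal.ofReal δ := by
    refine (measure_mono (Set.iUnion_subset fun n => ?_)).trans hφδ
    exact Set.sdiff_subset.trans (subset_iUnion_add A (hφ.monotone n.zero_le))
  refine ⟨i ∘ φ, s, hs, pairwise_disjoint_sdiff_iUnion_add A hφ, fun n => ?_, fun n => ?_⟩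
  · refine le_setLIntegral_sdiff (ne_top_of_le_ne_top hc.ne_top tsub_le_self) ?_ (hφε n)
    rw [add_tsub_cancel_of_le hac.le, ← eLpNorm_one_indicator_eq_setLIntegral_enorm _ (hA _)]
    exact (hlt (φ n)).le
  · rw [← eLpNorm_one_indicator_eq_setLIntegral_enorm _ (.iUnion hs)]
    exact hle _ _ (.iUnion hs) hμs

end GlidingHump

section LowerEstimate

theorem two_mul_enorm_le_enorm_sum_add {ι E : Type*} [SeminormedAddCommGroup E]
    (s : Finset ι) (v : ι → E) {k : ι} (hk : k ∈ s) :
    2 * ‖v k‖ₑ ≤ ‖∑ j ∈ s, v j‖ₑ + ∑ j ∈ s, ‖v j‖ₑ := by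
  classical
  have herase : ‖∑ j ∈ s.erase k, v j‖ₑ ≤ ∑ j ∈ s.erase k, ‖v j‖ₑ := by
    simp only [enorm_eq_nnnorm]
    exact_mod_cast nnnorm_sum_le (s.erase k) v
  have hk_le : ‖v k‖ₑ ≤ ‖∑ j ∈ s, v j‖ₑ + ∑ j ∈ s.erase k, ‖v j‖ₑ := by
    rw [← sub_eq_of_eq_add (Finset.add_sum_erase s v hk).symm]
    exact enorm_sub_le.trans (by gcongr)
  rw [two_mul, ← Finset.add_sum_erase s (fun j => ‖v j‖ₑ) hk, add_left_comm]
  gcongr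

variable {Ω E ι 𝕜 : Type*} [MeasurableSpace Ω] {μ : Measure Ω} [NormedAddCommGroup E] [Fintype ι]
  {s : ι → Set Ω}

theorem two_mul_sum_setLIntegral_enorm_le {v : ι → Ω → E} (hv : ∀ i, AEStronglyMeasurable (v i) μ)
    (hs : ∀ i, MeasurableSet (s i)) (hdisj : Pairwise (Disjoint on s)) :
    2 * ∑ k, ∫⁻ x in s k, ‖v k x‖ₑ ∂μ ≤
      ∫⁻ x, ‖∑ j, v j x‖ₑ ∂μ + ∑ j, ∫⁻ x in ⋃ k, s k, ‖v j x‖ₑ ∂μ := by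
  have hpiece (k : ι) : 2 * ∫⁻ x in s k, ‖v k x‖ₑ ∂μ ≤
      ∫⁻ x in s k, ‖∑ j, v j x‖ₑ ∂μ + ∑ j, ∫⁻ x in s k, ‖v j x‖ₑ ∂μ := by
    rw [← lintegral_const_mul' _ _ ENNReal.ofNat_ne_top,
      ← lintegral_finsetSum' _ fun j _ => (hv j).enorm.restrict,
      ← lintegral_add_left' (Finset.aestronglyMeasurable_fun_sum _ fun j _ => hv j).enorm.restrict]
    exact lintegral_mono fun x =>
      two_mul_enorm_le_enorm_sum_add Finset.univ (v · x) (Finset.mem_univ k)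
  have hunion (g : Ω → ℝ≥0∞) : ∑ k, ∫⁻ x in s k, g x ∂μ = ∫⁻ x in ⋃ k, s k, g x ∂μ := by
    rw [lintegral_iUnion hs hdisj, tsum_fintype]
  calc 2 * ∑ k, ∫⁻ x in s k, ‖v k x‖ₑ ∂μ
      ≤ ∑ k, (∫⁻ x in s k, ‖∑ j, v j x‖ₑ ∂μ + ∑ j, ∫⁻ x in s k, ‖v j x‖ₑ ∂μ) := by
        rw [Finset.mul_sum]; exact Finset.sum_le_sum fun k _ => hpiece k
    _ = ∫⁻ x in ⋃ k, s k, ‖∑ j, v j x‖ₑ ∂μ + ∑ j, ∫⁻ x in ⋃ k, s k, ‖v j x‖ₑ ∂μ := by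
        rw [Finset.sum_add_distrib, Finset.sum_comm, hunion]; simp only [hunion]
    _ ≤ _ := by gcongr; exact Measure.restrict_le_self

variable [NormedField 𝕜] [NormedSpace 𝕜 E]

theorem enorm_sum_smul_eq_lintegral (f : ι → Lp E 1 μ) (α : ι → 𝕜) :
    ‖∑ i, α i • f i‖ₑ = ∫⁻ x, ‖∑ i, α i • f i x‖ₑ ∂μ := by
  rw [Lp.enorm_def, eLpNorm_one_eq_lintegral_enorm]
  refine lintegral_congr_ae ?_
  filter_upwards [Lp.coeFn_fun_finsetSum Finset.univ fun i => α i • f i,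
    ae_all_iff.2 fun i => Lp.coeFn_smul (α i) (f i)] with x hsum hsmul
  simp only [hsum, hsmul, Pi.smul_apply]

theorem two_mul_mul_sum_nnnorm_le_nnnorm_sum_smul_add (f : ι → Lp E 1 μ)
    (hs : ∀ i, MeasurableSet (s i)) (hdisj : Pairwise (Disjoint on s)) {a b : ℝ≥0}
    (ha : ∀ i, a ≤ ∫⁻ x in s i, ‖f i x‖ₑ ∂μ) (hb : ∀ i, ∫⁻ x in ⋃ k, s k, ‖f i x‖ₑ ∂μ ≤ b)
    (α : ι → 𝕜) :
    2 * (a * ∑ i, ‖α i‖₊) ≤ ‖∑ i, α i • f i‖₊ + b * ∑ i, ‖α i‖₊ := by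
  have hsmul (i : ι) (t : Set Ω) :
      ∫⁻ x in t, ‖α i • f i x‖ₑ ∂μ = ‖α i‖ₑ * ∫⁻ x in t, ‖f i x‖ₑ ∂μ := by
    simp only [enorm_smul]
    exact lintegral_const_mul' _ _ enorm_ne_top
  have hmain : 2 * (a * ∑ i, ‖α i‖ₑ) ≤ ‖∑ i, α i • f i‖ₑ + b * ∑ i, ‖α i‖ₑ := calc
    _ ≤ 2 * ∑ i, ∫⁻ x in s i, ‖α i • f i x‖ₑ ∂μ := by
      simp only [hsmul]
      rw [mul_comm (a : ℝ≥0∞), Finset.sum_mul]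
      gcongr with i; exact ha i
    _ ≤ ∫⁻ x, ‖∑ i, α i • f i x‖ₑ ∂μ + ∑ i, ∫⁻ x in ⋃ k, s k, ‖α i • f i x‖ₑ ∂μ :=
      two_mul_sum_setLIntegral_enorm_le
        (fun i => (Lp.aestronglyMeasurable (f i)).const_smul (α i)) hs hdisj
    _ ≤ _ := by
      simp only [hsmul]
      rw [enorm_sum_smul_eq_lintegral, mul_comm (b : ℝ≥0∞), Finset.sum_mul]
      gcongr with i; exact hb i
  simp only [enorm_eq_nnnorm] at hmain
  exact_mod_cast hmain

end LowerEstimate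

theorem exists_seq_mul_sum_norm_le_of_not_unifIntegrable {Ω E ι : Type*} (𝕜 : Type*)
    [MeasurableSpace Ω] {μ : Measure Ω} [NormedAddCommGroup E] [NormedField 𝕜] [NormedSpace 𝕜 E]
    {f : ι → Lp E 1 μ} {C : ℝ≥0} (hC : ∀ i, eLpNorm (f i) 1 μ ≤ C)
    (hf : ¬ UnifIntegrable (fun i => (f i : Ω → E)) 1 μ) :
    ∃ (i : ℕ → ι) (δ : ℝ), 0 < δ ∧ ∀ (n : ℕ) (α : Fin n → 𝕜),
      δ * ∑ k, ‖α k‖ ≤ ‖∑ k, α k • f (i k)‖ := by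
  lift unifIntegrableModulus (fun i => (f i : Ω → E)) 1 μ to ℝ≥0 using
    ne_top_of_le_ne_top ENNReal.coe_ne_top (unifIntegrableModulus_le hC) with η hη
  have hη₀ : 0 < η := by
    refine pos_iff_ne_zero.2 fun h => hf (unifIntegrable_of_unifIntegrableModulus_eq_zero ?_)
    rw [← hη, h, ENNReal.coe_zero]
  have hlt : 3 / 4 * η < η := mul_lt_of_lt_one_left hη₀ (by norm_num)
  have hgt : η < 5 / 4 * η := lt_mul_of_one_lt_left hη₀ (by norm_num)
  obtain ⟨i, s, hs, hdisj, ha, hb⟩ := exists_pairwise_disjoint_le_setLIntegral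
    (fun i => Lp.memLp (f i)) (hη ▸ ENNReal.coe_lt_coe.2 hlt) (hη ▸ ENNReal.coe_lt_coe.2 hgt)
  refine ⟨i, η / 4, by positivity, fun n α => ?_⟩
  have h := two_mul_mul_sum_nnnorm_le_nnnorm_sum_smul_add (fun k : Fin n => f (i k)) (fun k => hs k)
    (fun j k hjk => hdisj (Fin.val_injective.ne hjk)) (fun k => ha k)
    (fun k => (lintegral_mono_set (Set.iUnion_subset fun j : Fin n =>
      Set.subset_iUnion s j)).trans (hb k)) α
  rw [← NNReal.coe_le_coe] at h
  push_cast at h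
  linarith

theorem stmt14_general {𝕜 X E : Type*} [RCLike 𝕜] [SeminormedAddCommGroup X] [NormedSpace 𝕜 X]
    [NormedAddCommGroup E] [InnerProductSpace 𝕜 E] [CompleteSpace E]
    {Ω : Type*} [MeasurableSpace Ω] (μ : Measure Ω) [IsFiniteMeasure μ] (T : X →L[𝕜] Lp E 1 μ)
    (hT : ¬ IsCompact (closure
      ((fun x => toWeakSpace 𝕜 (Lp E 1 μ) (T x)) '' closedBall (0 : X) 1))) :
    ∃ (x : ℕ → X) (δ : ℝ), 0 < δ ∧ (∀ n, x n ∈ closedBall (0 : X) 1) ∧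
      ∀ (n : ℕ) (α : Fin n → 𝕜),
        δ * ∑ k : Fin n, ‖α k‖ ≤ ‖T (∑ k : Fin n, α k • x k.1)‖ := by
  let f (x : closedBall (0 : X) 1) : Lp E 1 μ := T x
  have hbdd (x : closedBall (0 : X) 1) : eLpNorm (f x) 1 μ ≤ ‖T‖₊ := by
    rw [← Lp.enorm_def, enorm_le_coe]
    exact T.unit_le_opNorm x (mem_closedBall_zero_iff.1 x.2)
  have hf : ¬ UnifIntegrable (fun x => (f x : Ω → E)) 1 μ := fun hf => hT <| by
    have hcpt := isCompact_closure_toWeakSpace_range_of_uniformIntegrable (𝕜 := 𝕜)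
      ⟨fun x => Lp.aestronglyMeasurable (f x), hf, ‖T‖₊, hbdd⟩
    rw [Set.image_eq_range]
    rwa [← Set.range_comp] at hcpt
  obtain ⟨x, δ, hδ, hx⟩ := exists_seq_mul_sum_norm_le_of_not_unifIntegrable 𝕜 hbdd hf
  exact ⟨fun n => x n, δ, hδ, fun n => (x n).2, fun n α => by
    simpa only [map_sum, map_smul] using hx n α⟩

/-- Let `X` be a complex Banach space, `μ` a finite measure on `Ω`, and
`T : X → L¹(μ)` a bounded linear operator. If `T` is not weakly compact (the image of the
closed unit ball is not relatively compact for the weak topology of `L¹(μ)`), then `T`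
fixes a copy of `ℓ¹`: there are a sequence `{x_n}` in the closed unit ball of `X` and
`δ > 0` with `δ Σ|α_k| ≤ ‖T(Σ α_k x_k)‖` for all finitely many scalars `α₁, …, α_n`. -/
theorem stmt14 {X : Type*} [NormedAddCommGroup X] [NormedSpace ℂ X] [CompleteSpace X]
    {Ω : Type*} [MeasurableSpace Ω] (μ : Measure Ω) [IsFiniteMeasure μ]
    (T : X →L[ℂ] Lp ℂ 1 μ)
    (hT : ¬ IsCompact (closure
      ((fun x => toWeakSpace ℂ (Lp ℂ 1 μ) (T x)) '' closedBall (0:X) 1))) :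
    ∃ (x : ℕ → X) (δ : ℝ), 0 < δ ∧ (∀ n, x n ∈ closedBall (0:X) 1) ∧
      ∀ (n : ℕ) (α : Fin n → ℂ),
        δ * ∑ k : Fin n, ‖α k‖ ≤ ‖T (∑ k : Fin n, α k • x k.1)‖ :=
  stmt14_general μ T hT
end
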